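/- Let a be an object and w ∈ Hom(−, a). The map J ↦ w_J is an isomorphism of posets from the Boolean lattice 2^{I_L(w)} (ordered by inclusion) onto the set D̄_L(w) = {w_J : J ⊆ I, w_J ≤_R w} ordered by the weak order. -/

import Mathlib

/-!
Write `N(w)` for the set of positive roots at the target of `w` that `w⁻¹` makes negative.
The proof rests on two facts.

* `len_eq_NN`: the length of `w` is the cardinality of `N(w)`.
* `weakLe_of_NN_subset`: if `N(u) ⊆ N(w)` then `u ≤_R w`. Indeed `N(w) \ N(u)` is then the image
  under `u` of `N(u⁻¹w)`, so lengths add.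

An element of `W_J` only inverts roots supported on `J`, and an element of maximal length inverts
all of them, so `N(w_J)` is the set of positive roots supported on `J` (`exists_longest`). If
`J ⊆ I_L(w)`, then `w⁻¹` makes `α_j` negative for all `j ∈ J`, hence also every positive root
supported on `J`, and `w_J ≤_R w`. Conversely `σ_j ≤_R w_J` for `j ∈ J`, so `w_J ≤_R w` forces
`J ⊆ I_L(w)`, and `w_J ≤_R w_K` forces `α_j ∈ N(w_K)`, that is, `j ∈ K`.

The substance is the length formula (`reduce`). Multiplying by a simple reflection changes the
number of inversions by exactly one, so length is at least `|N(w)|`. For the other inequality one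
argues by induction on the length of a word for `g σ_i`: the only problematic case is that `g` is
reduced and makes `α_i` negative, and then a reduced word of `g` ending in `i` is needed. If a
given reduced word ends in `j ≠ i`, factor `g = u v` with `v` a word in `i`, `j`, lengths adding
up and `u` as short as possible. Then `u α_i` and `u α_j` are positive, so `v` makes the whole
rank two root system negative, is an alternating word of maximal length, and by the braid relation
(`braid`) can be rewritten to end in `i`.

The braid relation is where the condition on `(ρ_i ρ_j)^m` enters: it makes the objects match. The
quotient of the two alternating maps then preserves positivity, as does its inverse, and has
determinant one on the plane of `α_i`, `α_j`, which makes it the identity (`eq_id_of_pos`).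
-/


set_option linter.unusedSectionVars false

/-- A Cartan scheme `C = C(I, A, (ρ_i), (C^a))`. -/
structure CartanScheme (I A : Type) [Fintype I] [DecidableEq I] [Fintype A] [Nonempty A] where
  ρ : I → A → A
  c : A → I → I → ℤ
  ρ_invol : ∀ i a, ρ i (ρ i a) = a
  c_diag : ∀ a i, c a i i = 2
  c_offdiag_nonpos : ∀ a i j, i ≠ j → c a i j ≤ 0
  c_zero_symm : ∀ a i j, c a i j = 0 → c a j i = 0
  c_rho : ∀ a i j, c (ρ i a) i j = c a i j

namespace CartanScheme

variable {I A : Type} [Fintype I] [DecidableEq I] [Fintype A] [Nonempty A] [DecidableEq A]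
variable (C : CartanScheme I A)

/-- The simple reflection `σ_i^a` as a map `ℤ^I → ℤ^I`, `σ_i^a(α_j) = α_j - c^a_{ij} α_i`. -/
def sigma (a : A) (i : I) : (I → ℤ) → (I → ℤ) :=
  fun v k => v k - (if k = i then ∑ j, C.c a i j * v j else 0)

/-- Target object of the word `[i_1, …, i_k]` read at source object `a`:
`ρ_{i_1} ⋯ ρ_{i_k}(a)`. -/
def wordTarget (a : A) : List I → A
  | [] => a
  | i :: l => C.ρ i (wordTarget a l)

/-- The map `σ_{i_1} ⋯ σ_{i_k}^a : ℤ^I → ℤ^I` determined by a word with source `a`. -/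
def wordMap (a : A) : List I → ((I → ℤ) → (I → ℤ))
  | [] => id
  | i :: l => C.sigma (C.wordTarget a l) i ∘ wordMap a l

theorem wordTarget_append (a : A) (l₁ l₂ : List I) :
    C.wordTarget a (l₁ ++ l₂) = C.wordTarget (C.wordTarget a l₂) l₁ := by
  induction l₁ with
  | nil => rfl
  | cons i l ih => simp [wordTarget, ih]

theorem wordMap_append (a : A) (l₁ l₂ : List I) :
    C.wordMap a (l₁ ++ l₂) = C.wordMap (C.wordTarget a l₂) l₁ ∘ C.wordMap a l₂ := by
  induction l₁ with
  | nil => rfl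
  | cons i l ih => simp [wordMap, ih, wordTarget_append, Function.comp_assoc]

/-- A morphism of the Weyl groupoid `W(C)`: a source object, a target object, and a map
`ℤ^I → ℤ^I` which is a composition of simple reflections along some word. -/
@[ext]
structure Mor where
  src : A
  tgt : A
  toFun : (I → ℤ) → (I → ℤ)
  spec : ∃ l : List I, C.wordTarget src l = tgt ∧ C.wordMap src l = toFun

variable {C}

/-- A word realizes a morphism. -/
def Realizes (w : Mor C) (l : List I) : Prop :=
  C.wordTarget w.src l = w.tgt ∧ C.wordMap w.src l = w.toFun

variable (C)

/-- The identity morphism `id^a`. -/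
def idMor (a : A) : Mor C := ⟨a, a, id, ⟨[], rfl, rfl⟩⟩

/-- The generator `σ_i^a ∈ Hom(a, ρ_i(a))`. -/
def genMor (i : I) (a : A) : Mor C :=
  ⟨a, C.ρ i a, C.sigma a i, ⟨[i], rfl, Function.comp_id _⟩⟩

/-- The simple reflection with target `a`, i.e. `id^a σ_i = σ_i^{ρ_i(a)} ∈ Hom(ρ_i(a), a)`. -/
def sgen (a : A) (i : I) : Mor C :=
  { src := C.ρ i a, tgt := a, toFun := C.sigma (C.ρ i a) i,
    spec := ⟨[i], by simp [wordTarget, C.ρ_invol], Function.comp_id _⟩ }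

variable {C}

/-- Composition `u ∘ v` (with `v` applied first); junk value `u` if not composable. -/
def Mor.comp (u v : Mor C) : Mor C :=
  if h : v.tgt = u.src then
    { src := v.src, tgt := u.tgt, toFun := u.toFun ∘ v.toFun,
      spec := by
        obtain ⟨lu, hu1, hu2⟩ := u.spec
        obtain ⟨lv, hv1, hv2⟩ := v.spec
        refine ⟨lu ++ lv, ?_, ?_⟩
        · rw [C.wordTarget_append, hv1, h, hu1]
        · rw [C.wordMap_append, hv1, h, hu2, hv2] }
  else u

/-- Length of a morphism: minimal length of a realizing word. -/
noncomputable def len (w : Mor C) : ℕ := sInf {k | ∃ l : List I, Realizes w l ∧ l.length = k}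

/-- A reduced decomposition. -/
def IsReduced (w : Mor C) (l : List I) : Prop := Realizes w l ∧ l.length = len w

/-- The (right) weak order: `u ≤_R uv` iff `ℓ(uv) = ℓ(u) + ℓ(v)`. -/
def weakLe (u w : Mor C) : Prop :=
  ∃ v : Mor C, v.tgt = u.src ∧ w = u.comp v ∧ len w = len u + len v

/-- Membership in the parabolic subgroupoid `W_J(C)`. -/
def InParabolic (J : Set I) (w : Mor C) : Prop :=
  ∃ l : List I, (∀ i ∈ l, i ∈ J) ∧ Realizes w l

/-- Length with respect to the generators `σ_j`, `j ∈ J`. -/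
noncomputable def lenPar (J : Set I) (w : Mor C) : ℕ :=
  sInf {k | ∃ l : List I, (∀ i ∈ l, i ∈ J) ∧ Realizes w l ∧ l.length = k}

/-- The set of letters occurring in some reduced decomposition of `w`;
by the theorem on reduced decompositions this is the set `J(w)`. -/
def Jset (w : Mor C) : Set I := {i | ∃ l : List I, IsReduced w l ∧ i ∈ l}

variable (C)

/-- The set of real roots at the object `a`. -/
def roots (a : A) : Set (I → ℤ) :=
  {α | ∃ (b : A) (l : List I) (j : I),
    C.wordTarget b l = a ∧ α = C.wordMap b l (Pi.single j 1)}

/-- The set of positive (real) roots at `a`. -/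
def posRoots (a : A) : Set (I → ℤ) := {α ∈ C.roots a | ∀ i, 0 ≤ α i}

/-- `R^re(C)` is a finite root system of type `C`: axioms (R1), (R2), (R4) and finiteness
((R3) holds automatically for real roots). -/
def IsFRS : Prop :=
  (∀ a : A, (C.roots a).Finite) ∧
  (∀ (a : A) (α : I → ℤ), α ∈ C.roots a → (∀ i, 0 ≤ α i) ∨ (∀ i, α i ≤ 0)) ∧
  (∀ (a : A) (i : I) (α : I → ℤ), α ∈ C.roots a → (∃ z : ℤ, α = z • Pi.single i 1) →
    α = Pi.single i 1 ∨ α = -Pi.single i 1) ∧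
  (∀ (a : A) (i j : I), i ≠ j →
    (fun x => C.ρ i (C.ρ j x))^[(C.roots a ∩
      {α | ∃ m n : ℕ, α = (m : ℤ) • Pi.single i 1 + (n : ℤ) • Pi.single j 1}).ncard] a = a)

variable {C}

/-- `I_L(w)`: the set of simple reflections with target `w.tgt` below `w` in weak order. -/
def IL (w : Mor C) : Set I := {i | weakLe (sgen C w.tgt i) w}

/-- `m` is the longest element of `Hom(-,a) ∩ W_J(C)`, i.e. `w_J` at the object `a`. -/
def IsLongestPar (a : A) (J : Set I) (m : Mor C) : Prop :=
  m.tgt = a ∧ InParabolic J m ∧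
    ∀ x : Mor C, x.tgt = a → InParabolic J x → weakLe x m

/-- `m` is the longest element `w_I` of `Hom(-,a)`. -/
def IsLongestAt (a : A) (m : Mor C) : Prop :=
  m.tgt = a ∧ ∀ x : Mor C, x.tgt = a → weakLe x m

/-- `z` is the meet of `x` and `y` in `(Hom(-,a), ≤_R)`. -/
def IsMeet (a : A) (x y z : Mor C) : Prop :=
  z.tgt = a ∧ weakLe z x ∧ weakLe z y ∧
    ∀ t : Mor C, t.tgt = a → weakLe t x → weakLe t y → weakLe t z

/-- `z` is the join of `x` and `y` in `(Hom(-,a), ≤_R)`. -/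
def IsJoin (a : A) (x y z : Mor C) : Prop :=
  z.tgt = a ∧ weakLe x z ∧ weakLe y z ∧
    ∀ t : Mor C, t.tgt = a → weakLe x t → weakLe y t → weakLe z t

/-- The left coset `u W_J(C) ⊆ Hom(-, u.tgt)`. -/
def leftCoset (u : Mor C) (J : Set I) : Set (Mor C) :=
  {x | ∃ v : Mor C, InParabolic J v ∧ v.tgt = u.src ∧ x = u.comp v}

end CartanScheme

variable {I A : Type} [Fintype I] [DecidableEq I] [Fintype A] [Nonempty A] [DecidableEq A]

open CartanScheme

namespace CartanScheme

variable {C : CartanScheme I A}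

/-- The simple root `α_i`. -/
abbrev sr (i : I) : I → ℤ := Pi.single i 1

/-- Coordinatewise nonnegativity. -/
def Pos (v : I → ℤ) : Prop := ∀ k, 0 ≤ v k

/-- `WPath C J n b a f`: the map `f` is a product of `n` simple reflections with labels in `J`,
starting at the object `b` and ending at `a`.  Words grow at the source end, so that a step
multiplies `f` on the right by a simple reflection. -/
inductive WPath (C : CartanScheme I A) (J : Set I) :
    ℕ → A → A → ((I → ℤ) → (I → ℤ)) → Prop
  | nil (b : A) : WPath C J 0 b b id
  | snoc {n : ℕ} {b a : A} {g : (I → ℤ) → (I → ℤ)} (i : I) (hi : i ∈ J)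
      (h : WPath C J n (C.ρ i b) a g) : WPath C J (n + 1) b a (g ∘ C.sigma b i)

/-- The positive roots at `b` that `f` does not send to positive roots. -/
def Invs (C : CartanScheme I A) (b : A) (f : (I → ℤ) → (I → ℤ)) : Set (I → ℤ) :=
  {β | β ∈ C.posRoots b ∧ ¬ Pos (f β)}

/-! ### Simple reflections and words -/

theorem sigma_rho (i : I) (b : A) : C.sigma (C.ρ i b) i = C.sigma b i := by
  funext v k
  simp only [sigma, C.c_rho]

theorem sigma_apply_ne (b : A) {i k : I} (h : k ≠ i) (v : I → ℤ) : C.sigma b i v k = v k := by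
  simp [sigma, h]

theorem sigma_sr (b : A) (i : I) : C.sigma b i (sr i) = - sr i := by
  funext k
  by_cases h : k = i
  · subst h
    simp [sigma, Pi.single_apply, C.c_diag]
  · simp [sigma, h]

theorem sigma_add (b : A) (i : I) (v w : I → ℤ) :
    C.sigma b i (v + w) = C.sigma b i v + C.sigma b i w := by
  funext k
  by_cases h : k = i
  · simp [sigma, h, mul_add, Finset.sum_add_distrib]; ring
  · simp [sigma, h]

theorem sigma_smul (b : A) (i : I) (z : ℤ) (v : I → ℤ) :
    C.sigma b i (z • v) = z • C.sigma b i v := by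
  funext k
  by_cases h : k = i
  · simp only [sigma, h, if_true, Pi.smul_apply, smul_eq_mul, mul_sub, Finset.mul_sum]
    congr 1
    exact Finset.sum_congr rfl fun j _ => by ring
  · simp [sigma, h]

theorem sigma_sigma (b : A) (i : I) (v : I → ℤ) : C.sigma b i (C.sigma b i v) = v := by
  -- `σ_i v = v + z α_i` for an integer `z`, and `σ_i α_i = -α_i`
  have h : C.sigma b i v = v + (-(∑ j, C.c b i j * v j)) • sr i := by
    funext k
    by_cases h : k = i
    · subst h; simp [sigma]; ring
    · simp [sigma, h]
  have h2 := congrArg (C.sigma b i) h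
  rw [sigma_add, sigma_smul, sigma_sr] at h2
  rw [h2, h]
  simp

theorem WPath.comp {J : Set I} {p q : ℕ} {c d a : A} {u v : (I → ℤ) → (I → ℤ)}
    (hu : WPath C J p d a u) (hv : WPath C J q c d v) : WPath C J (p + q) c a (u ∘ v) := by
  induction hv with
  | nil b => exact hu
  | snoc i hi h ih => exact WPath.snoc i hi (ih hu)

theorem WPath.mono {J K : Set I} (hJK : J ⊆ K) {n : ℕ} {b a : A} {f : (I → ℤ) → (I → ℤ)}
    (h : WPath C J n b a f) : WPath C K n b a f := by
  induction h with
  | nil b => exact WPath.nil b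
  | snoc i hi h ih => exact WPath.snoc i (hJK hi) ih

theorem WPath.single {J : Set I} (b : A) {i : I} (hi : i ∈ J) :
    WPath C J 1 b (C.ρ i b) (C.sigma b i) :=
  WPath.snoc i hi (WPath.nil _)

theorem WPath.of_word {J : Set I} (b : A) (l : List I) (hl : ∀ i ∈ l, i ∈ J) :
    WPath C J l.length b (C.wordTarget b l) (C.wordMap b l) := by
  induction l with
  | nil => exact WPath.nil b
  | cons i l ih =>
    have h := (WPath.single (C := C) (C.wordTarget b l) (hl i (by simp))).comp
      (ih fun j hj => hl j (by simp [hj]))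
    simpa [wordTarget, wordMap, add_comm] using h

theorem WPath.word {J : Set I} {n : ℕ} {b a : A} {f : (I → ℤ) → (I → ℤ)}
    (h : WPath C J n b a f) :
    ∃ l : List I, (∀ i ∈ l, i ∈ J) ∧ C.wordTarget b l = a ∧ C.wordMap b l = f ∧
      l.length = n := by
  induction h with
  | nil b => exact ⟨[], by simp, rfl, rfl, rfl⟩
  | @snoc n b a g i hi h ih =>
    obtain ⟨l, h1, h2, h3, h4⟩ := ih
    refine ⟨l ++ [i], ?_, ?_, ?_, by simp [h4]⟩
    · intro j hj
      rcases List.mem_append.1 hj with hj | hj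
      · exact h1 j hj
      · rw [List.mem_singleton.1 hj]; exact hi
    · simpa [wordTarget_append, wordTarget] using h2
    · simpa [wordMap_append, wordTarget, wordMap] using congrArg (· ∘ C.sigma b i) h3

theorem WPath.linear {J : Set I} {n : ℕ} {b a : A} {f : (I → ℤ) → (I → ℤ)}
    (h : WPath C J n b a f) : ∃ L : (I → ℤ) →ₗ[ℤ] (I → ℤ), ⇑L = f := by
  induction h with
  | nil b => exact ⟨LinearMap.id, rfl⟩
  | @snoc n b a g i hi h ih =>
    obtain ⟨L, rfl⟩ := ih
    exact ⟨L ∘ₗ ⟨⟨C.sigma b i, sigma_add b i⟩, sigma_smul b i⟩, rfl⟩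

theorem WPath.map_neg {J : Set I} {n : ℕ} {b a : A} {f : (I → ℤ) → (I → ℤ)}
    (h : WPath C J n b a f) (v : I → ℤ) : f (-v) = - f v := by
  obtain ⟨L, rfl⟩ := h.linear
  exact LinearMap.map_neg L v

theorem WPath.apply_eq_sum {J : Set I} {n : ℕ} {b a : A} {f : (I → ℤ) → (I → ℤ)}
    (h : WPath C J n b a f) (v : I → ℤ) (k : I) : f v k = ∑ j, v j * f (sr j) k := by
  obtain ⟨L, rfl⟩ := h.linear
  have hv : v = ∑ j, v j • sr j := by
    funext l
    simp [Finset.sum_apply, Pi.single_apply]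
  conv_lhs => rw [hv]
  simp only [map_sum, map_smul, Finset.sum_apply, Pi.smul_apply, smul_eq_mul]

theorem WPath.inverse {J : Set I} {n : ℕ} {b a : A} {f : (I → ℤ) → (I → ℤ)}
    (h : WPath C J n b a f) :
    ∃ g, WPath C J n a b g ∧ (∀ v, g (f v) = v) ∧ (∀ v, f (g v) = v) := by
  induction h with
  | nil b => exact ⟨id, WPath.nil b, fun _ => rfl, fun _ => rfl⟩
  | @snoc n b a f i hi h ih =>
    obtain ⟨g, h1, h2, h3⟩ := ih
    have h4 := (WPath.single (C := C) (C.ρ i b) hi).comp h1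
    rw [C.ρ_invol, sigma_rho, add_comm] at h4
    exact ⟨_, h4, fun v => by simp [h2, sigma_sigma], fun v => by simp [h3, sigma_sigma]⟩

theorem WPath.coord {J : Set I} {n : ℕ} {b a : A} {f : (I → ℤ) → (I → ℤ)}
    (h : WPath C J n b a f) {k : I} (hk : k ∉ J) (v : I → ℤ) : f v k = v k := by
  induction h generalizing v with
  | nil b => rfl
  | @snoc n b a g i hi h ih =>
    have : k ≠ i := fun e => hk (e ▸ hi)
    simp [ih, sigma_apply_ne b this]

/-! ### Roots and their signs -/

theorem sr_pos (i : I) : Pos (sr i) := by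
  intro k
  by_cases h : k = i
  · subst h; simp
  · simp [h]

theorem sr_ne_zero (i : I) : sr i ≠ 0 := fun h => by
  have := congrFun h i
  simp at this

theorem not_pos_neg {v : I → ℤ} (h : Pos v) (h0 : v ≠ 0) : ¬ Pos (-v) := fun h' =>
  h0 (funext fun k => le_antisymm (by have := h' k; simp at this; exact this) (h k))

theorem sr_mem_roots (a : A) (i : I) : sr i ∈ C.roots a := ⟨a, [], i, rfl, rfl⟩

theorem sr_mem_posRoots (a : A) (i : I) : sr i ∈ C.posRoots a :=
  ⟨sr_mem_roots a i, sr_pos i⟩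

theorem WPath.map_root {J : Set I} {n : ℕ} {b a : A} {f : (I → ℤ) → (I → ℤ)}
    (h : WPath C J n b a f) {β : I → ℤ} (hβ : β ∈ C.roots b) : f β ∈ C.roots a := by
  obtain ⟨l, -, h1, h2, -⟩ := h.word
  obtain ⟨d, l', j, h3, h4⟩ := hβ
  refine ⟨d, l ++ l', j, ?_, ?_⟩
  · rw [wordTarget_append, h3, h1]
  · rw [wordMap_append, h3, h2, h4]; rfl

theorem neg_mem_roots {a : A} {β : I → ℤ} (hβ : β ∈ C.roots a) : -β ∈ C.roots a := by
  obtain ⟨d, l, j, h3, h4⟩ := hβ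
  refine ⟨C.ρ j d, l ++ [j], j, ?_, ?_⟩
  · simp [wordTarget_append, wordTarget, C.ρ_invol, h3]
  · have hp := WPath.of_word (C := C) (J := Set.univ) d l (by simp)
    simp [wordMap_append, wordTarget, wordMap, C.ρ_invol, sigma_rho, h4, sigma_sr, hp.map_neg]

theorem root_ne_zero {a : A} {β : I → ℤ} (hβ : β ∈ C.roots a) : β ≠ 0 := by
  obtain ⟨d, l, j, h3, h4⟩ := hβ
  have hp := WPath.of_word (C := C) (J := Set.univ) d l (by simp)
  obtain ⟨g, -, h5, -⟩ := hp.inverse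
  obtain ⟨L, hL⟩ := hp.linear
  rintro rfl
  apply sr_ne_zero j
  have h0 : C.wordMap d l 0 = 0 := by rw [← hL, map_zero]
  have h6 := h5 (sr j)
  have h7 := h5 0
  rw [← h4] at h6
  rw [h0] at h7
  rw [← h6, h7]

theorem pos_neg_of_not_pos (hC : C.IsFRS) {a : A} {β : I → ℤ} (hβ : β ∈ C.roots a)
    (h : ¬ Pos β) : Pos (-β) := by
  rcases hC.2.1 a β hβ with h' | h'
  · exact absurd h' h
  · intro k; have := h' k; simp; exact this

theorem pos_of_coord_pos (hC : C.IsFRS) {a : A} {β : I → ℤ} (hβ : β ∈ C.roots a) {k : I}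
    (h : 0 < β k) : Pos β := by
  rcases hC.2.1 a β hβ with h' | h'
  · exact h'
  · exact absurd (h' k) (not_le.2 h)

/-- `σ_i` permutes the positive roots other than `α_i`. -/
theorem sigma_mem_posRoots (hC : C.IsFRS) {a : A} {i : I} {β : I → ℤ} (hβ : β ∈ C.posRoots a)
    (hne : β ≠ sr i) : C.sigma a i β ∈ C.posRoots (C.ρ i a) := by
  have hr := (WPath.single (C := C) (J := Set.univ) a (Set.mem_univ i)).map_root hβ.1
  refine ⟨hr, ?_⟩
  obtain ⟨k, hk, hk0⟩ : ∃ k, k ≠ i ∧ β k ≠ 0 := by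
    by_contra! hcon
    have hz : β = β i • sr i := by
      funext k
      by_cases h : k = i
      · subst h; simp
      · simp [h, hcon k h]
    rcases hC.2.2.1 a i β hβ.1 ⟨_, hz⟩ with h | h
    · exact hne h
    · exact not_pos_neg (sr_pos i) (sr_ne_zero i) (h ▸ hβ.2)
  refine pos_of_coord_pos hC hr (k := k) ?_
  rw [sigma_apply_ne a hk]
  exact lt_of_le_of_ne (hβ.2 k) hk0.symm

/-! ### Inversions -/

theorem finite_Invs (hC : C.IsFRS) (b : A) (f : (I → ℤ) → (I → ℤ)) : (Invs C b f).Finite :=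
  (hC.1 b).subset fun _ h => h.1.1

theorem Invs_up (hC : C.IsFRS) {n : ℕ} {c a : A} {f : (I → ℤ) → (I → ℤ)}
    (h : WPath C Set.univ n c a f) {i : I} (hp : Pos (f (sr i))) :
    (Invs C (C.ρ i c) (f ∘ C.sigma c i)).ncard = (Invs C c f).ncard + 1 := by
  have hset : Invs C (C.ρ i c) (f ∘ C.sigma c i) = insert (sr i) (C.sigma c i '' Invs C c f) := by
    ext γ
    constructor
    · rintro ⟨h1, h2⟩
      by_cases hγ : γ = sr i
      · exact Or.inl hγ
      · right
        have h3 := sigma_mem_posRoots hC h1 hγ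
        rw [C.ρ_invol, sigma_rho] at h3
        exact ⟨_, ⟨h3, h2⟩, sigma_sigma c i γ⟩
    · rintro (rfl | ⟨β, ⟨h1, h2⟩, rfl⟩)
      · refine ⟨sr_mem_posRoots _ _, ?_⟩
        simp only [Function.comp, sigma_sr, h.map_neg]
        exact not_pos_neg hp (root_ne_zero (h.map_root (sr_mem_roots c i)))
      · have hβ : β ≠ sr i := by rintro rfl; exact h2 hp
        exact ⟨sigma_mem_posRoots hC h1 hβ, by simpa [sigma_sigma] using h2⟩
  have hinj : Function.Injective (C.sigma c i) :=
    Function.LeftInverse.injective (sigma_sigma c i)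
  rw [hset, Set.ncard_insert_of_notMem _ ((finite_Invs hC c f).image _),
    Set.ncard_image_of_injective _ hinj]
  rintro ⟨β, ⟨h1, -⟩, h3⟩
  have h4 := congrArg (C.sigma c i) h3
  rw [sigma_sigma, sigma_sr] at h4
  exact not_pos_neg (sr_pos i) (sr_ne_zero i) (h4 ▸ h1.2)

theorem Invs_down (hC : C.IsFRS) {n : ℕ} {c a : A} {f : (I → ℤ) → (I → ℤ)}
    (h : WPath C Set.univ n c a f) {i : I} (hp : ¬ Pos (f (sr i))) :
    (Invs C c f).ncard = (Invs C (C.ρ i c) (f ∘ C.sigma c i)).ncard + 1 := by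
  have h1 : WPath C Set.univ (n + 1) (C.ρ i c) a (f ∘ C.sigma c i) := by
    have := WPath.snoc (C := C) (b := C.ρ i c) i (Set.mem_univ i) (by rwa [C.ρ_invol])
    rwa [sigma_rho] at this
  have h2 := Invs_up hC h1 (i := i) (by
    simp only [Function.comp, sigma_sr, h.map_neg]
    exact pos_neg_of_not_pos hC (h.map_root (sr_mem_roots c i)) hp)
  rw [C.ρ_invol, sigma_rho] at h2
  rwa [show (f ∘ C.sigma c i) ∘ C.sigma c i = f by funext v; simp [sigma_sigma]] at h2

theorem Invs_le (hC : C.IsFRS) {n : ℕ} {b a : A} {f : (I → ℤ) → (I → ℤ)}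
    (h : WPath C Set.univ n b a f) : (Invs C b f).ncard ≤ n := by
  induction h with
  | nil b =>
    have : Invs C b id = ∅ := by
      ext β; simp only [Invs, Set.mem_ofPred_eq, Set.mem_empty_iff_false, iff_false, not_and, not_not]
      exact fun h => h.2
    simp [this]
  | @snoc n b a g i hi h ih =>
    have e : C.ρ i (C.ρ i b) = b := C.ρ_invol i b
    by_cases hp : Pos (g (sr i))
    · have := Invs_up hC h hp
      rw [e, sigma_rho] at this
      omega
    · have := Invs_down hC h hp
      rw [e, sigma_rho] at this
      omega

theorem WPath.map_pos {J : Set I} {n : ℕ} {b a : A} {f : (I → ℤ) → (I → ℤ)}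
    (h : WPath C J n b a f) {v : I → ℤ} (hv : Pos v)
    (hs : ∀ j, v j = 0 ∨ Pos (f (sr j))) : Pos (f v) := by
  intro k
  rw [h.apply_eq_sum]
  refine Finset.sum_nonneg fun j _ => ?_
  rcases hs j with h0 | h0
  · simp [h0]
  · exact mul_nonneg (hv j) (h0 k)

theorem WPath.map_nonpos (hC : C.IsFRS) {J : Set I} {n : ℕ} {b a : A}
    {f : (I → ℤ) → (I → ℤ)} (h : WPath C J n b a f) {v : I → ℤ} (hv : Pos v)
    (hs : ∀ j, v j = 0 ∨ ¬ Pos (f (sr j))) : Pos (-(f v)) := by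
  intro k
  rw [Pi.neg_apply, h.apply_eq_sum, ← Finset.sum_neg_distrib]
  refine Finset.sum_nonneg fun j _ => ?_
  rcases hs j with h0 | h0
  · simp [h0]
  · have h1 := pos_neg_of_not_pos hC (h.map_root (sr_mem_roots b j)) h0 k
    rw [← mul_neg]
    exact mul_nonneg (hv j) h1

/-- The positive roots at `c` supported on `J`. -/
def PR (C : CartanScheme I A) (J : Set I) (c : A) : Set (I → ℤ) :=
  {β | β ∈ C.posRoots c ∧ ∀ k, k ∉ J → β k = 0}

theorem finite_PR (hC : C.IsFRS) (J : Set I) (c : A) : (PR C J c).Finite :=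
  (hC.1 c).subset fun _ h => h.1.1

theorem sr_mem_PR {J : Set I} {i : I} (hi : i ∈ J) (c : A) : sr i ∈ PR C J c :=
  ⟨sr_mem_posRoots c i, fun k hk => by
    have : k ≠ i := fun e => hk (e ▸ hi)
    simp [this]⟩

/-- An element of the parabolic subgroupoid `W_J` leaves the coordinates outside `J` alone, so
it can only invert roots supported on `J`. -/
theorem WPath.Invs_subset_PR (hC : C.IsFRS) {J : Set I} {n : ℕ} {b a : A}
    {f : (I → ℤ) → (I → ℤ)} (h : WPath C J n b a f) : Invs C b f ⊆ PR C J b := by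
  rintro β ⟨h1, h2⟩
  refine ⟨h1, fun k hk => ?_⟩
  by_contra h0
  refine h2 (pos_of_coord_pos hC (h.map_root h1.1) (k := k) ?_)
  rw [h.coord hk]
  exact lt_of_le_of_ne (h1.2 k) (Ne.symm h0)

theorem WPath.PR_subset_Invs (hC : C.IsFRS) {J K : Set I} {n : ℕ} {b a : A}
    {f : (I → ℤ) → (I → ℤ)} (h : WPath C K n b a f) (hs : ∀ j ∈ J, ¬ Pos (f (sr j))) :
    PR C J b ⊆ Invs C b f := by
  rintro β ⟨h1, h2⟩
  refine ⟨h1, fun h3 => ?_⟩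
  have h4 : Pos (-(f β)) := h.map_nonpos hC h1.2 fun j => by
    by_cases hj : j ∈ J
    · exact Or.inr (hs j hj)
    · exact Or.inl (h2 j hj)
  exact not_pos_neg h3 (root_ne_zero (h.map_root h1.1)) h4

theorem ncard_PR_le (hC : C.IsFRS) {J : Set I} {i : I} (hi : i ∈ J) (c : A) :
    (PR C J c).ncard ≤ (PR C J (C.ρ i c)).ncard := by
  have h : (PR C J c \ {sr i}).ncard ≤ (PR C J (C.ρ i c) \ {sr i}).ncard := by
    refine Set.ncard_le_ncard_of_injOn (C.sigma c i) ?_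
      (Function.LeftInverse.injective (sigma_sigma c i)).injOn ((finite_PR hC J _).sdiff)
    rintro β ⟨⟨h1, h2⟩, h3⟩
    refine ⟨⟨sigma_mem_posRoots hC h1 h3, fun k hk => ?_⟩, fun h4 => ?_⟩
    · have hki : k ≠ i := fun e => hk (e ▸ hi)
      rw [sigma_apply_ne c hki]
      exact h2 k hk
    · rw [Set.mem_singleton_iff] at h4
      have h5 := congrArg (C.sigma c i) h4
      rw [sigma_sigma, sigma_sr] at h5
      exact not_pos_neg (sr_pos i) (sr_ne_zero i) (h5 ▸ h1.2)
  have h1 := Set.ncard_sdiff_singleton_add_one (sr_mem_PR (C := C) hi c) (finite_PR hC J c)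
  have h2 := Set.ncard_sdiff_singleton_add_one (sr_mem_PR (C := C) hi (C.ρ i c))
    (finite_PR hC J _)
  omega

theorem ncard_PR_rho (hC : C.IsFRS) {J : Set I} {i : I} (hi : i ∈ J) (c : A) :
    (PR C J (C.ρ i c)).ncard = (PR C J c).ncard := by
  refine le_antisymm ?_ (ncard_PR_le hC hi c)
  have := ncard_PR_le hC hi (C.ρ i c)
  rwa [C.ρ_invol] at this

/-! ### Rank two: the braid relations -/

/-- Target of the alternating word of length `k` in `i` and `j` that starts at `c` with `i`. -/
def altT (C : CartanScheme I A) : ℕ → I → I → A → A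
  | 0, _, _, c => c
  | k + 1, i, j, c => altT C k j i (C.ρ i c)

/-- Map of the alternating word of length `k` in `i` and `j` that starts at `c` with `i`. -/
def altF (C : CartanScheme I A) : ℕ → I → I → A → ((I → ℤ) → (I → ℤ))
  | 0, _, _, _ => id
  | k + 1, i, j, c => altF C k j i (C.ρ i c) ∘ C.sigma c i

theorem alt_path {J : Set I} (k : ℕ) {i j : I} (hi : i ∈ J) (hj : j ∈ J) (c : A) :
    WPath C J k c (altT C k i j c) (altF C k i j c) := by
  induction k generalizing i j c with
  | zero => exact WPath.nil c
  | succ k ih => exact WPath.snoc i hi (ih hj hi _)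

theorem WPath.univ {J : Set I} {n : ℕ} {b a : A} {f : (I → ℤ) → (I → ℤ)}
    (h : WPath C J n b a f) : WPath C Set.univ n b a f :=
  h.mono (Set.subset_univ J)

/-- Alternating words stay reduced until their length reaches the number of positive roots in
the rank two root system. -/
theorem alt_ncard (hC : C.IsFRS) {J : Set I} (k : ℕ) {i j : I}
    (hJ : ∀ l, l ∈ J ↔ l = i ∨ l = j) (c : A) (hk : k ≤ (PR C J c).ncard) :
    (Invs C c (altF C k i j c)).ncard = k := by
  induction k generalizing i j c with
  | zero =>
    have := Invs_le hC (alt_path (C := C) 0 ((hJ i).2 (Or.inl rfl)) ((hJ j).2 (Or.inr rfl)) c).univ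
    omega
  | succ k ih =>
    have hi : i ∈ J := (hJ i).2 (Or.inl rfl)
    have hj : j ∈ J := (hJ j).2 (Or.inr rfl)
    have hm := ncard_PR_rho hC hi c
    have h1 := ih (i := j) (j := i) (fun l => (hJ l).trans or_comm) (C.ρ i c) (by omega)
    have hp := alt_path (C := C) k hj hi (C.ρ i c)
    have e : C.ρ i (C.ρ i c) = c := C.ρ_invol i c
    have hpos : Pos (altF C k j i (C.ρ i c) (sr i)) := by
      by_contra hneg
      cases k with
      | zero => exact hneg (sr_pos i)
      | succ k =>
        have hneg' : ¬ Pos (altF C (k + 1) j i (C.ρ i c) (sr j)) := by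
          intro h2
          -- removing the last letter would lengthen the word
          have h3 := Invs_up hC hp.univ h2
          have h4 := alt_path (C := C) k hi hj (C.ρ j (C.ρ i c))
          have h5 : altF C (k + 1) j i (C.ρ i c) ∘ C.sigma (C.ρ i c) j
              = altF C k i j (C.ρ j (C.ρ i c)) := by
            funext v
            simp [altF, sigma_sigma]
          rw [h5] at h3
          have h6 := Invs_le hC h4.univ
          omega
        have h2 := hp.PR_subset_Invs hC (J := J) (by
          intro l hl
          rcases (hJ l).1 hl with rfl | rfl
          · exact hneg
          · exact hneg')
        have h3 := Set.ncard_le_ncard h2 (finite_Invs hC _ _)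
        omega
    have h2 := Invs_up hC hp.univ hpos
    rw [e, sigma_rho, h1] at h2
    exact h2

theorem alt_classify (hC : C.IsFRS) {J : Set I} {i j : I} (hJ : ∀ l, l ∈ J ↔ l = i ∨ l = j)
    {k : ℕ} {c d : A} {f : (I → ℤ) → (I → ℤ)} (h : WPath C J k c d f)
    (hk : (Invs C c f).ncard = k) :
    (f = altF C k i j c ∧ d = altT C k i j c) ∨ (f = altF C k j i c ∧ d = altT C k j i c) := by
  induction h with
  | nil b => exact Or.inl ⟨rfl, rfl⟩
  | @snoc n c d g l hl h ih =>
    have hg : (Invs C (C.ρ l c) g).ncard = n := by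
      have h1 := Invs_le hC h.univ
      by_cases hp : Pos (g (sr l))
      · have h2 := Invs_up hC h.univ hp
        rw [C.ρ_invol, sigma_rho] at h2
        omega
      · have h2 := Invs_down hC h.univ hp
        rw [C.ρ_invol, sigma_rho] at h2
        omega
    -- a word `g' σ_l σ_l` is not reduced
    have key : ∀ l' : I, l' ∈ J → g = altF C n l l' (C.ρ l c) → n = 0 := by
      intro l' hl' hg'
      cases n with
      | zero => rfl
      | succ n =>
        have h1 := alt_path (C := C) n hl' hl (C.ρ l (C.ρ l c))
        have h2 : g ∘ C.sigma c l = altF C n l' l (C.ρ l (C.ρ l c)) := by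
          funext v
          simp [hg', altF, sigma_rho, sigma_sigma]
        rw [C.ρ_invol] at h1 h2
        rw [h2] at hk
        have := Invs_le hC h1.univ
        omega
    have hi : i ∈ J := (hJ i).2 (Or.inl rfl)
    have hj : j ∈ J := (hJ j).2 (Or.inr rfl)
    rcases (hJ l).1 hl with rfl | rfl <;> rcases ih hg with ⟨h1, h2⟩ | ⟨h1, h2⟩
    · obtain rfl := key j hj h1
      exact Or.inl ⟨by rw [h1]; rfl, h2⟩
    · exact Or.inl ⟨by rw [h1]; rfl, h2⟩
    · exact Or.inr ⟨by rw [h1]; rfl, h2⟩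
    · obtain rfl := key i hi h1
      exact Or.inr ⟨by rw [h1]; rfl, h2⟩

theorem altT_iterate (k : ℕ) (i j : I) (c : A) :
    altT C k i j ((fun x => C.ρ i (C.ρ j x))^[k] c) = altT C k j i c := by
  induction k generalizing i j c with
  | zero => rfl
  | succ k ih =>
    have h : ∀ n : ℕ, C.ρ j ((fun x => C.ρ i (C.ρ j x))^[n] c)
        = (fun x => C.ρ j (C.ρ i x))^[n] (C.ρ j c) := by
      intro n
      induction n with
      | zero => rfl
      | succ n ihn => rw [Function.iterate_succ_apply', Function.iterate_succ_apply', ihn]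
    simp only [altT, Function.iterate_succ_apply', C.ρ_invol]
    rw [h, ih]

theorem sigma_sr_ne (b : A) {i j : I} (hij : i ≠ j) :
    C.sigma b i (sr j) = sr j - C.c b i j • sr i := by
  funext k
  by_cases h : k = i
  · subst h
    simp [sigma, Pi.single_apply]
  · simp [sigma, h]

/-- The determinant of the block of `f` with rows and columns `i`, `j`. -/
def det2 (i j : I) (f : (I → ℤ) → (I → ℤ)) : ℤ :=
  f (sr i) i * f (sr j) j - f (sr i) j * f (sr j) i

theorem WPath.det2_eq {J : Set I} {i j : I} (hij : i ≠ j)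
    (hJ : ∀ l, l ∈ J ↔ l = i ∨ l = j) {n : ℕ} {b a : A} {f : (I → ℤ) → (I → ℤ)}
    (h : WPath C J n b a f) : det2 i j f = (-1) ^ n := by
  induction h with
  | nil b => simp [det2, hij, hij.symm]
  | @snoc n b a g l hl h ih =>
    obtain ⟨L, rfl⟩ := h.linear
    rw [pow_succ, ← ih]
    rcases (hJ l).1 hl with rfl | rfl
    · simp only [det2, Function.comp, sigma_sr, sigma_sr_ne b hij, _root_.map_neg, map_sub, map_smul,
        Pi.neg_apply, Pi.sub_apply, Pi.smul_apply, smul_eq_mul]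
      ring
    · simp only [det2, Function.comp, sigma_sr, sigma_sr_ne b hij.symm, _root_.map_neg, map_sub,
        map_smul, Pi.neg_apply, Pi.sub_apply, Pi.smul_apply, smul_eq_mul]
      ring

/-- An even word in two letters which, together with its inverse, preserves positivity of the
two simple roots acts as the identity: on the plane it is a nonnegative integer matrix of
determinant one with nonnegative inverse, and modulo the plane it is unipotent with
nonnegative off-diagonal part, as is its inverse. -/
theorem eq_id_of_pos (hC : C.IsFRS) {J : Set I} {i j : I} (hij : i ≠ j)
    (hJ : ∀ l, l ∈ J ↔ l = i ∨ l = j) {n n' : ℕ} {c d : A} {h g : (I → ℤ) → (I → ℤ)}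
    (hh : WPath C J n c d h) (hg : WPath C J n' d c g) (hn : Even n)
    (hgh : ∀ v, g (h v) = v) (hp : ∀ l ∈ J, Pos (h (sr l))) (gp : ∀ l ∈ J, Pos (g (sr l))) :
    h = id := by
  have hi : i ∈ J := (hJ i).2 (Or.inl rfl)
  have hj : j ∈ J := (hJ j).2 (Or.inr rfl)
  have hdet := hh.det2_eq hij hJ
  rw [hn.neg_one_pow, det2] at hdet
  have hne : ∀ k, k ∉ J → k ≠ i ∧ k ≠ j := fun k hk => by
    rw [hJ, not_or] at hk; exact hk
  have hexp : ∀ v, (∀ k, k ∉ J → v k = 0) → v = v i • sr i + v j • sr j := by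
    intro v hv
    funext k
    by_cases hk : k ∈ J
    · rcases (hJ k).1 hk with rfl | rfl
      · simp [hij]
      · simp [hij.symm]
    · simp [hv k hk, (hne k hk).1, (hne k hk).2]
  have hsup : ∀ l ∈ J, h (sr l) = h (sr l) i • sr i + h (sr l) j • sr j := fun l hl =>
    hexp _ fun k hk => by rw [hh.coord hk]; exact (sr_mem_PR (C := C) hl c).2 k hk
  obtain ⟨G, rfl⟩ := hg.linear
  have hgi := hgh (sr i)
  have hgj := hgh (sr j)
  rw [hsup i hi, map_add, map_smul, map_smul] at hgi
  rw [hsup j hj, map_add, map_smul, map_smul] at hgj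
  have e1 := congrFun hgi i
  have e2 := congrFun hgi j
  have e3 := congrFun hgj i
  have e4 := congrFun hgj j
  simp [hij, hij.symm] at e1 e2 e3 e4
  have hA := gp i hi i
  have hC' := gp i hi j
  have hB := gp j hj i
  have hD := gp j hj j
  have hpp := hp i hi i
  have hr := hp i hi j
  have hq := hp j hj i
  have hs := hp j hj j
  obtain ⟨hp1, hr0, hq0, hs1⟩ : h (sr i) i = 1 ∧ h (sr i) j = 0 ∧ h (sr j) i = 0 ∧
      h (sr j) j = 1 := by
    generalize h (sr i) i = p at *
    generalize h (sr i) j = r at *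
    generalize h (sr j) i = q at *
    generalize h (sr j) j = s at *
    generalize G (sr i) i = a1 at *
    generalize G (sr i) j = a2 at *
    generalize G (sr j) i = a3 at *
    generalize G (sr j) j = a4 at *
    have hps : 0 < p * s := by nlinarith
    have hp0 : 0 < p := lt_of_le_of_ne hpp (by rintro rfl; simp at hps)
    have hs0 : 0 < s := lt_of_le_of_ne hs (by rintro rfl; simp at hps)
    have h3 : a3 = 0 := by
      have : s * a3 = 0 := by nlinarith [mul_nonneg hq hA, mul_nonneg hs hB]
      exact (mul_eq_zero.1 this).resolve_left hs0.ne'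
    have h2 : a2 = 0 := by
      have : p * a2 = 0 := by nlinarith [mul_nonneg hr hD, mul_nonneg hpp hC']
      exact (mul_eq_zero.1 this).resolve_left hp0.ne'
    subst h3 h2
    simp at e1 e2 e3 e4
    have hp1 : p = 1 := by
      rcases Int.mul_eq_one_iff_eq_one_or_neg_one.1 e1 with h | h <;> omega
    have hs1 : s = 1 := by
      rcases Int.mul_eq_one_iff_eq_one_or_neg_one.1 e4 with h | h <;> omega
    subst hp1 hs1
    refine ⟨rfl, ?_, ?_, rfl⟩
    · rcases e2 with h | h
      · exact h
      · simp [h] at e4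
    · rcases e3 with h | h
      · exact h
      · simp [h] at e1
  have hhi : h (sr i) = sr i := by rw [hsup i hi, hp1, hr0]; simp
  have hhj : h (sr j) = sr j := by rw [hsup j hj, hq0, hs1]; simp
  have hGi : G (sr i) = sr i := by have := hgh (sr i); rwa [hhi] at this
  have hGj : G (sr j) = sr j := by have := hgh (sr j); rwa [hhj] at this
  have hall : ∀ k, h (sr k) = sr k := by
    intro k
    by_cases hk : k ∈ J
    · rcases (hJ k).1 hk with rfl | rfl
      · exact hhi
      · exact hhj
    obtain ⟨hki, hkj⟩ := hne k hk
    have hβ : Pos (h (sr k)) := pos_of_coord_pos hC (hh.map_root (sr_mem_roots c k)) (k := k)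
      (by rw [hh.coord hk]; simp)
    have hγ : Pos (G (sr k)) := pos_of_coord_pos hC (hg.map_root (sr_mem_roots d k)) (k := k)
      (by rw [hg.coord hk]; simp)
    have hb : h (sr k) = sr k + (h (sr k) i • sr i + h (sr k) j • sr j) := by
      have := hexp (h (sr k) - sr k) fun l hl => by simp [hh.coord hl]
      simp only [Pi.sub_apply, Pi.single_eq_of_ne hki.symm, Pi.single_eq_of_ne hkj.symm,
        sub_zero] at this
      rw [← sub_eq_iff_eq_add', this]
    have h1 := hgh (sr k)
    rw [hb, map_add, map_add, map_smul, map_smul, hGi, hGj] at h1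
    have h2 := congrFun h1 i
    have h3 := congrFun h1 j
    simp [hij, hij.symm, hki.symm, hkj.symm] at h2 h3
    have := hβ i
    have := hβ j
    have := hγ i
    have := hγ j
    have hz1 : h (sr k) i = 0 := by omega
    have hz2 : h (sr k) j = 0 := by omega
    rw [hb, hz1, hz2]
    simp
  funext v k
  rw [hh.apply_eq_sum]
  simp [hall, Pi.single_apply]

theorem pos_of_inverts (hC : C.IsFRS) {J : Set I} {n n' : ℕ} {c d : A}
    {f f' g : (I → ℤ) → (I → ℤ)} (hf' : WPath C J n c d f') (hg : WPath C J n' d c g)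
    (hfg : ∀ v, f (g v) = v) (hf : Invs C c f = PR C J c) (hf2 : Invs C c f' = PR C J c)
    {l : I} (hl : l ∈ J) : Pos (g (f' (sr l))) := by
  have hneg : ∀ k ∈ J, ¬ Pos (g (sr k)) := by
    intro k hk hpos
    have h1 : g (sr k) ∈ PR C J c := ⟨⟨hg.map_root (sr_mem_roots d k), hpos⟩, fun m hm => by
      rw [hg.coord hm]
      exact (sr_mem_PR (C := C) hk d).2 m hm⟩
    rw [← hf] at h1
    have h2 := h1.2
    rw [hfg] at h2
    exact h2 (sr_pos k)
  have h1 : sr l ∈ Invs C c f' := by rw [hf2]; exact sr_mem_PR hl c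
  have h2 := pos_neg_of_not_pos hC (hf'.map_root h1.1.1) h1.2
  have h3 := hg.map_nonpos hC h2 fun k => by
    by_cases hk : k ∈ J
    · exact Or.inr (hneg k hk)
    · left
      rw [Pi.neg_apply, hf'.coord hk, (sr_mem_PR (C := C) hl c).2 k hk, neg_zero]
  rwa [hg.map_neg, neg_neg] at h3

/-- The braid relation: the two alternating words whose length is the number of positive roots
of the rank two root system agree. -/
theorem braid (hC : C.IsFRS) {J : Set I} {i j : I} (hij : i ≠ j)
    (hJ : ∀ l, l ∈ J ↔ l = i ∨ l = j) (c : A) :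
    altT C (PR C J c).ncard i j c = altT C (PR C J c).ncard j i c ∧
    altF C (PR C J c).ncard i j c = altF C (PR C J c).ncard j i c := by
  have hi : i ∈ J := (hJ i).2 (Or.inl rfl)
  have hj : j ∈ J := (hJ j).2 (Or.inr rfl)
  have hJ' : ∀ l, l ∈ J ↔ l = j ∨ l = i := fun l => (hJ l).trans or_comm
  have hset : C.roots c ∩ {α | ∃ m n : ℕ, α = (m : ℤ) • Pi.single i 1 +
      (n : ℤ) • Pi.single j 1} = PR C J c := by
    ext α
    constructor
    · rintro ⟨h1, m, n, rfl⟩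
      refine ⟨⟨h1, fun k => ?_⟩, fun k hk => ?_⟩
      · have h2 := sr_pos i k
        have h3 := sr_pos j k
        simp only [Pi.add_apply, Pi.smul_apply, smul_eq_mul]
        positivity
      · rw [hJ, not_or] at hk
        simp [hk.1, hk.2]
    · rintro ⟨⟨h1, h2⟩, h3⟩
      refine ⟨h1, (α i).toNat, (α j).toNat, ?_⟩
      rw [Int.toNat_of_nonneg (h2 i), Int.toNat_of_nonneg (h2 j)]
      funext k
      by_cases hk : k ∈ J
      · rcases (hJ k).1 hk with rfl | rfl
        · simp [hij]
        · simp [hij.symm]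
      · have h4 := h3 k hk
        rw [hJ, not_or] at hk
        simp [h4, hk.1, hk.2]
  have hR4 := hC.2.2.2 c i j hij
  rw [hset] at hR4
  have hT : altT C (PR C J c).ncard i j c = altT C (PR C J c).ncard j i c := by
    have := altT_iterate (C := C) (PR C J c).ncard i j c
    rwa [hR4] at this
  refine ⟨hT, ?_⟩
  have hf := alt_path (C := C) (PR C J c).ncard hi hj c
  have hf' := alt_path (C := C) (PR C J c).ncard hj hi c
  have hn := alt_ncard hC (PR C J c).ncard hJ c le_rfl
  have hn' := alt_ncard hC (PR C J c).ncard hJ' c le_rfl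
  rw [← hT] at hf'
  generalize altF C (PR C J c).ncard i j c = f at *
  generalize altF C (PR C J c).ncard j i c = f' at *
  have e := Set.eq_of_subset_of_ncard_le (hf.Invs_subset_PR hC) hn.ge (finite_PR hC J c)
  have e' := Set.eq_of_subset_of_ncard_le (hf'.Invs_subset_PR hC) hn'.ge (finite_PR hC J c)
  obtain ⟨g, hg, hgf, hfg⟩ := hf.inverse
  obtain ⟨g', hg', hgf', hfg'⟩ := hf'.inverse
  have hid := eq_id_of_pos hC hij hJ (hg.comp hf') (hg'.comp hf) ⟨_, rfl⟩
    (fun v => by simp [hfg, hgf'])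
    (fun l hl => pos_of_inverts hC hf' hg hfg e e' hl)
    (fun l hl => pos_of_inverts hC hf hg' hfg' e' e hl)
  funext v
  have h1 := congrArg f (congrFun hid v)
  simp only [Function.comp, hfg, id] at h1
  exact h1.symm

/-! ### Length is the number of inversions -/

/-- Every element has a word whose length is the number of its inversions. -/
theorem reduce (hC : C.IsFRS) (n : ℕ) : ∀ {b a : A} {f : (I → ℤ) → (I → ℤ)},
    WPath C Set.univ n b a f → WPath C Set.univ (Invs C b f).ncard b a f := by
  induction n using Nat.strong_induction_on with
  | _ n IH =>
  intro b a f hf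
  cases hf with
  | nil b =>
    have h0 : (Invs C b id).ncard = 0 := by
      have := Invs_le hC (WPath.nil (C := C) (J := Set.univ) b)
      omega
    rw [h0]
    exact WPath.nil b
  | @snoc n b a g i hi hg =>
  have e : C.ρ i (C.ρ i b) = b := C.ρ_invol i b
  have hle := Invs_le hC hg
  have hg' := IH n (Nat.lt_succ_self n) hg
  rcases hle.lt_or_eq with hlt | hgn
  · exact IH _ (by omega) (WPath.snoc i hi hg')
  by_cases hpi : Pos (g (sr i))
  · have h1 := Invs_up hC hg hpi
    rw [e, sigma_rho] at h1
    rw [h1]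
    exact WPath.snoc i hi hg'
  -- Now `g` is reduced and inverts `α_i`; a word of length `n` for `g` ending in `i` is needed.
  suffices hex : ∃ k g', k + 1 = n ∧ WPath C Set.univ k b a g' ∧ g = g' ∘ C.sigma b i by
    obtain ⟨k, g', hk, h1, rfl⟩ := hex
    have h2 : (g' ∘ C.sigma b i) ∘ C.sigma b i = g' := by funext v; simp [sigma_sigma]
    rw [h2]
    exact IH k (by omega) h1
  clear hg'
  cases hg with
  | nil b => exact absurd (sr_pos i) hpi
  | @snoc n _ _ g2 j _ hg2 =>
  set c := C.ρ i b with hc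
  by_cases hij : i = j
  · subst hij
    refine ⟨n, g2, rfl, ?_, ?_⟩
    · rwa [e] at hg2
    · rw [hc, sigma_rho]
  have hg : WPath C Set.univ (n + 1) c a (g2 ∘ C.sigma c j) := WPath.snoc j hi hg2
  have hpj : ¬ Pos ((g2 ∘ C.sigma c j) (sr j)) := by
    intro h
    have h1 := Invs_up hC hg h
    have h2 := Invs_le hC hg2
    rw [show (g2 ∘ C.sigma c j) ∘ C.sigma c j = g2 by funext v; simp [sigma_sigma]] at h1
    omega
  let J : Set I := {i, j}
  have hJ : ∀ l, l ∈ J ↔ l = i ∨ l = j := fun l => by simp [J]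
  have hiJ : i ∈ J := (hJ i).2 (Or.inl rfl)
  have hjJ : j ∈ J := (hJ j).2 (Or.inr rfl)
  -- Factor `g = u ∘ v` with `v` a word in `i`, `j`, lengths adding up, and `u` as short as
  -- possible.
  classical
  have hQ : ∃ p q d u v, WPath C Set.univ p d a u ∧ WPath C J q c d v ∧ p + q = n + 1 ∧
      g2 ∘ C.sigma c j = u ∘ v :=
    ⟨n, 1, _, g2, _, hg2, WPath.single c hjJ, rfl, rfl⟩
  have hpn : Nat.find hQ ≤ n :=
    Nat.find_min' hQ ⟨1, _, g2, _, hg2, WPath.single c hjJ, rfl, rfl⟩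
  obtain ⟨q, d, u, v, hu, hv, hpq, huv⟩ := Nat.find_spec hQ
  have hmin : ∀ p' < Nat.find hQ, ¬ _ := fun p' hp' => Nat.find_min hQ hp'
  generalize Nat.find hQ = p at *
  have hup : ∀ l ∈ J, Pos (u (sr l)) := by
    intro l hl
    by_contra hneg
    have hu1 : WPath C Set.univ (Invs C d u).ncard d a u := IH p (by omega) hu
    have hup : (Invs C d u).ncard = p := by
      have h1 := Invs_le hC hu
      have h2 := Invs_le hC (hu1.comp hv.univ)
      rw [← huv] at h2
      omega
    have h1 := Invs_down hC hu hneg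
    have h2 : WPath C Set.univ (p + 1) (C.ρ l d) a (u ∘ C.sigma d l) := by
      have := WPath.snoc (C := C) (n := p) (b := C.ρ l d) l (Set.mem_univ l)
        (by rwa [C.ρ_invol])
      rwa [sigma_rho] at this
    have h3 := IH (p + 1) (by omega) h2
    refine hmin (Invs C (C.ρ l d) (u ∘ C.sigma d l)).ncard (by omega)
      ⟨1 + q, _, _, _, h3, (WPath.single d hl).comp hv, by omega, ?_⟩
    rw [huv]
    funext x
    simp [sigma_sigma]
  have hvneg : ∀ l ∈ J, ¬ Pos (v (sr l)) := by
    intro l hl hpos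
    have h1 : Pos (u (v (sr l))) := hu.map_pos hpos fun k => by
      by_cases hk : k ∈ J
      · exact Or.inr (hup k hk)
      · left
        rw [hv.coord hk]
        exact (sr_mem_PR (C := C) hl c).2 k hk
    have h2 : u (v (sr l)) = (g2 ∘ C.sigma c j) (sr l) := by rw [huv]; rfl
    rw [h2] at h1
    rcases (hJ l).1 hl with rfl | rfl
    · exact hpi h1
    · exact hpj h1
  -- `v` is reduced and inverts the whole rank two system
  have hvq : (Invs C c v).ncard = q := by
    have h1 := Invs_le hC hv.univ
    have hq : q ≤ n + 1 := by omega
    have h2 := Invs_le hC (hu.comp (IH q (by omega) hv.univ))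
    rw [← huv] at h2
    omega
  have hvm : (PR C J c).ncard = q := by
    rw [← hvq, (hv.Invs_subset_PR hC).antisymm (hv.PR_subset_Invs hC hvneg)]
  obtain ⟨hbT, hbF⟩ := braid hC hij hJ c
  rw [hvm] at hbT hbF
  have hv' : v = altF C q i j c ∧ d = altT C q i j c := by
    rcases alt_classify hC hJ hv hvq with h | h
    · exact h
    · rwa [hbT, hbF]
  cases q with
  | zero => omega
  | succ k =>
    have h1 := alt_path (C := C) k hjJ hiJ (C.ρ i c)
    have h2 : WPath C J k (C.ρ i c) d (altF C k j i (C.ρ i c)) := by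
      rw [hv'.2]; exact h1
    rw [show C.ρ i c = b from e] at h2
    refine ⟨p + k, _, by omega, hu.comp h2.univ, ?_⟩
    rw [huv, hv'.1, altF, show C.ρ i c = b from e, hc, sigma_rho]
    rfl

/-! ### The weak order in terms of inversion sets -/

theorem mor_path (w : Mor C) : WPath C Set.univ (len w) w.src w.tgt w.toFun := by
  obtain ⟨l, hl⟩ := w.spec
  obtain ⟨l', h1, h2⟩ : len w ∈ {k | ∃ l : List I, Realizes w l ∧ l.length = k} :=
    Nat.sInf_mem ⟨_, l, hl, rfl⟩
  have := WPath.of_word (C := C) (J := Set.univ) w.src l' (by simp)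
  rwa [h1.1, h1.2, h2] at this

theorem len_le {w : Mor C} {n : ℕ} (h : WPath C Set.univ n w.src w.tgt w.toFun) :
    len w ≤ n := by
  obtain ⟨l, -, h1, h2, h3⟩ := h.word
  exact Nat.sInf_le ⟨l, ⟨h1, h2⟩, h3⟩

theorem len_eq (hC : C.IsFRS) (w : Mor C) : len w = (Invs C w.src w.toFun).ncard :=
  le_antisymm (len_le (reduce hC _ (mor_path w))) (Invs_le hC (mor_path w))

/-- The morphism given by a word. -/
def morOf {n : ℕ} {b a : A} {f : (I → ℤ) → (I → ℤ)} (h : WPath C Set.univ n b a f) : Mor C :=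
  ⟨b, a, f, by
    obtain ⟨l, -, h1, h2, -⟩ := h.word
    exact ⟨l, h1, h2⟩⟩

/-- The map of the inverse morphism of `w`. -/
noncomputable def minv (w : Mor C) : (I → ℤ) → (I → ℤ) := (mor_path w).inverse.choose

theorem minv_path (w : Mor C) : WPath C Set.univ (len w) w.tgt w.src (minv w) :=
  (mor_path w).inverse.choose_spec.1

theorem minv_apply (w : Mor C) (v : I → ℤ) : minv w (w.toFun v) = v :=
  (mor_path w).inverse.choose_spec.2.1 v

theorem apply_minv (w : Mor C) (v : I → ℤ) : w.toFun (minv w v) = v :=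
  (mor_path w).inverse.choose_spec.2.2 v

theorem minv_unique {w : Mor C} {g : (I → ℤ) → (I → ℤ)} (h : ∀ v, g (w.toFun v) = v) :
    g = minv w := by
  funext v
  rw [← apply_minv w v, h, apply_minv]

/-- The inversion set of `w`: the positive roots at the target of `w` that `w⁻¹` makes
negative. -/
def NN (w : Mor C) : Set (I → ℤ) := Invs C w.tgt (minv w)

theorem len_eq_NN (hC : C.IsFRS) (w : Mor C) : len w = (NN w).ncard := by
  refine le_antisymm ?_ (Invs_le hC (minv_path w))
  obtain ⟨g, h1, h2, -⟩ := (reduce hC _ (minv_path w)).inverse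
  have : g = w.toFun := by
    funext v
    rw [← minv_apply w v, h2, minv_apply]
  rw [this] at h1
  exact len_le h1

theorem comp_src {u v : Mor C} (h : v.tgt = u.src) : (u.comp v).src = v.src := by
  simp [Mor.comp, h]

theorem comp_tgt {u v : Mor C} : (u.comp v).tgt = u.tgt := by
  by_cases h : v.tgt = u.src <;> simp [Mor.comp, h]

theorem comp_toFun {u v : Mor C} (h : v.tgt = u.src) :
    (u.comp v).toFun = u.toFun ∘ v.toFun := by
  simp [Mor.comp, h]

theorem len_comp_le {u v : Mor C} (h : v.tgt = u.src) : len (u.comp v) ≤ len u + len v := by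
  refine len_le ?_
  rw [comp_src h, comp_tgt, comp_toFun h]
  have h1 := mor_path v
  rw [h] at h1
  exact (mor_path u).comp h1

theorem weakLe_tgt {u w : Mor C} (h : weakLe u w) : w.tgt = u.tgt := by
  obtain ⟨v, -, rfl, -⟩ := h
  exact comp_tgt

theorem weakLe_trans {u w x : Mor C} (h1 : weakLe u w) (h2 : weakLe w x) : weakLe u x := by
  obtain ⟨v, hv, rfl, hl⟩ := h1
  obtain ⟨t, ht, rfl, hl'⟩ := h2
  rw [comp_src hv] at ht
  have hvt : (v.comp t).tgt = u.src := comp_tgt.trans hv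
  have ht' : t.tgt = (u.comp v).src := by rw [comp_src hv, ht]
  have he : (u.comp v).comp t = u.comp (v.comp t) := by
    apply Mor.ext
    · rw [comp_src ht', comp_src hvt, comp_src ht]
    · rw [comp_tgt, comp_tgt, comp_tgt]
    · rw [comp_toFun ht', comp_toFun hv, comp_toFun hvt, comp_toFun ht]; rfl
  refine ⟨v.comp t, hvt, he, ?_⟩
  have h3 := len_comp_le ht
  have h4 := len_comp_le hvt
  rw [← he] at h4
  omega

theorem weakLe_antisymm {u w : Mor C} (h1 : weakLe u w) (h2 : weakLe w u) : u = w := by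
  obtain ⟨v, hv, rfl, hl⟩ := h1
  obtain ⟨t, -, -, hl'⟩ := h2
  have h0 : len v = 0 := by omega
  have hp := mor_path v
  rw [h0] at hp
  have hsrc : v.src = v.tgt ∧ v.toFun = id := by
    generalize v.src = b, v.tgt = a, v.toFun = f at hp
    cases hp
    exact ⟨rfl, rfl⟩
  apply Mor.ext
  · rw [comp_src hv, hsrc.1, hv]
  · rw [comp_tgt]
  · rw [comp_toFun hv, hsrc.2]; rfl

theorem weakLe_of_NN_subset (hC : C.IsFRS) {u w : Mor C} (ht : w.tgt = u.tgt)
    (h : NN u ⊆ NN w) : weakLe u w := by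
  have hw := mor_path w
  rw [ht] at hw
  have hX := minv_path w
  rw [ht] at hX
  have hV := hX.comp (mor_path u)
  let v : Mor C := morOf ((minv_path u).comp hw)
  have hv : v.tgt = u.src := rfl
  have hinv : minv w ∘ u.toFun = minv v :=
    (minv_unique fun x => by
      change minv w (u.toFun (minv u (w.toFun x))) = x
      rw [apply_minv, minv_apply])
  have he : w = u.comp v := by
    apply Mor.ext
    · rw [comp_src hv]; rfl
    · rw [comp_tgt, ht]
    · rw [comp_toFun hv]
      funext x
      change w.toFun x = u.toFun (minv u (w.toFun x))
      rw [apply_minv]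
  refine ⟨v, hv, he, ?_⟩
  have hset : NN w \ NN u = u.toFun '' NN v := by
    ext β
    constructor
    · rintro ⟨⟨h1, h2⟩, h3⟩
      rw [ht] at h1
      have h4 : Pos (minv u β) := by
        by_contra hcon
        exact h3 ⟨h1, hcon⟩
      refine ⟨minv u β, ⟨⟨(minv_path u).map_root h1.1, h4⟩, ?_⟩, apply_minv u β⟩
      rw [← hinv]
      simpa [apply_minv] using h2
    · rintro ⟨γ, ⟨h1, h2⟩, rfl⟩
      rw [← hinv] at h2
      have hroot := (mor_path u).map_root h1.1
      have hpos : Pos (u.toFun γ) := by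
        -- otherwise `-u γ` is inverted by `u⁻¹` but not by `w⁻¹`
        by_contra hneg
        have h3 : -(u.toFun γ) ∈ NN u := by
          refine ⟨⟨neg_mem_roots hroot, pos_neg_of_not_pos hC hroot hneg⟩, ?_⟩
          rw [(minv_path u).map_neg, minv_apply]
          exact not_pos_neg h1.2 (root_ne_zero h1.1)
        have h4 := (h h3).2
        rw [hX.map_neg] at h4
        exact h4 (pos_neg_of_not_pos hC (hV.map_root h1.1) h2)
      refine ⟨⟨?_, h2⟩, fun h3 => h3.2 ?_⟩
      · rw [ht]; exact ⟨hroot, hpos⟩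
      · rw [minv_apply]; exact h1.2
  rw [len_eq_NN hC w, len_eq_NN hC u, len_eq_NN hC v,
    ← Set.ncard_image_of_injective (NN v)
      (Function.LeftInverse.injective (minv_apply u)), ← hset,
    add_comm, Set.ncard_sdiff_add_ncard_of_subset h (finite_Invs hC _ _)]

theorem sr_mem_NN (hC : C.IsFRS) {w : Mor C} {i : I} (h : weakLe (sgen C w.tgt i) w) :
    sr i ∈ NN w := by
  refine ⟨sr_mem_posRoots _ _, fun hpos => ?_⟩
  obtain ⟨v, hv, he, hl⟩ := h
  have h1 := Invs_up hC (minv_path w) hpos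
  have hinv : minv w ∘ C.sigma w.tgt i = minv v := minv_unique fun x => by
    have h2 : w.toFun = C.sigma (C.ρ i w.tgt) i ∘ v.toFun := by
      conv_lhs => rw [he]
      exact comp_toFun hv
    have h3 := minv_apply w x
    rw [h2, sigma_rho] at h3
    exact h3
  have hv' : v.tgt = C.ρ i w.tgt := hv
  have h4 := len_eq_NN hC v
  have h5 := len_eq_NN hC w
  rw [NN, hv', ← hinv, h1] at h4
  rw [NN] at h5
  omega

/-! ### Longest elements of parabolic subgroupoids -/

theorem InParabolic.path {J : Set I} {x : Mor C} (h : InParabolic J x) :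
    ∃ n, WPath C J n x.src x.tgt x.toFun ∧ WPath C J n x.tgt x.src (minv x) := by
  obtain ⟨l, h1, h2, h3⟩ := h
  have h4 := WPath.of_word (C := C) x.src l h1
  rw [h2, h3] at h4
  obtain ⟨g, h5, h6, -⟩ := h4.inverse
  rw [minv_unique h6] at h5
  exact ⟨_, h4, h5⟩

theorem inParabolic_of_path {J : Set I} {x : Mor C} {n : ℕ}
    (h : WPath C J n x.src x.tgt x.toFun) : InParabolic J x := by
  obtain ⟨l, h1, h2, h3, -⟩ := h.word
  exact ⟨l, h1, h2, h3⟩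

theorem sgen_inParabolic {J : Set I} {i : I} (hi : i ∈ J) (a : A) :
    InParabolic J (sgen C a i) :=
  ⟨[i], by simpa using hi, by simp [wordTarget, sgen, C.ρ_invol], rfl⟩

/-- An element of maximal length in the parabolic subgroupoid inverts every positive root
supported on `J`, hence lies above all the others. -/
theorem exists_longest (hC : C.IsFRS) (a : A) (J : Set I) :
    ∃ m : Mor C, IsLongestPar a J m ∧ NN m = PR C J a := by
  have hsub : ∀ x : Mor C, x.tgt = a → InParabolic J x → NN x ⊆ PR C J a := by
    rintro x rfl h2
    obtain ⟨n, -, h3⟩ := h2.path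
    exact h3.Invs_subset_PR hC
  let S : Set ℕ := {k | ∃ x : Mor C, x.tgt = a ∧ InParabolic J x ∧ len x = k}
  have hne : S.Nonempty := ⟨_, idMor C a, rfl, ⟨[], by simp, rfl, rfl⟩, rfl⟩
  have hbdd : BddAbove S := by
    refine ⟨(PR C J a).ncard, ?_⟩
    rintro _ ⟨x, h1, h2, rfl⟩
    rw [len_eq_NN hC]
    exact Set.ncard_le_ncard (hsub x h1 h2) (finite_PR hC J a)
  obtain ⟨m, hma, hmJ, hm⟩ := Nat.sSup_mem hne hbdd
  obtain ⟨n, hp, hq⟩ := hmJ.path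
  have hneg : ∀ j ∈ J, ¬ Pos (m.toFun (sr j)) := by
    intro j hj hpos
    have h1 := Invs_up hC hp.univ hpos
    have h2 : WPath C J (n + 1) (C.ρ j m.src) m.tgt (m.toFun ∘ C.sigma m.src j) := by
      have := WPath.snoc (C := C) (n := n) (b := C.ρ j m.src) j hj (by rwa [C.ρ_invol])
      rwa [sigma_rho] at this
    have h3 : len (morOf h2.univ) ∈ S := ⟨morOf h2.univ, hma, inParabolic_of_path h2, rfl⟩
    have h4 := le_csSup hbdd h3
    have h5 : len (morOf h2.univ) = len m + 1 := by
      rw [len_eq hC, len_eq hC m]; exact h1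
    omega
  have hN : NN m = PR C J a := by
    refine (hsub m hma hmJ).antisymm ?_
    rintro β ⟨h1, h2⟩
    refine ⟨hma.symm ▸ h1, fun hpos => ?_⟩
    have h3 := hp.map_nonpos hC hpos fun k => by
      by_cases hk : k ∈ J
      · exact Or.inr (hneg k hk)
      · left; rw [hq.coord hk]; exact h2 k hk
    rw [apply_minv] at h3
    exact not_pos_neg h1.2 (root_ne_zero h1.1) h3
  refine ⟨m, ⟨hma, hmJ, fun x hx hxJ => ?_⟩, hN⟩
  refine weakLe_of_NN_subset hC (hma.trans hx.symm) ?_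
  rw [hN]
  exact hsub x hx hxJ

theorem IsLongestPar.unique {a : A} {J : Set I} {m m' : Mor C} (h : IsLongestPar a J m)
    (h' : IsLongestPar a J m') : m = m' :=
  weakLe_antisymm (h'.2.2 m h.1 h.2.1) (h.2.2 m' h'.1 h'.2.1)

end CartanScheme

/-- The map `J ↦ w_J` is a poset isomorphism from the Boolean lattice
`2^{I_L(w)}` onto `D̄_L(w) = {w_J : J ⊆ I, w_J ≤_R w}` with the weak order. -/
theorem boolean_iso_DbarL (C : CartanScheme I A) (hC : C.IsFRS) (a : A)
    (w : Mor C) (hw : w.tgt = a) :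
    ∃ f : Set I → Mor C,
      (∀ J : Set I, J ⊆ IL w → IsLongestPar a J (f J)) ∧
      Set.BijOn f {J : Set I | J ⊆ IL w}
        {m : Mor C | ∃ J : Set I, IsLongestPar a J m ∧ weakLe m w} ∧
      (∀ J K : Set I, J ⊆ IL w → K ⊆ IL w → (J ⊆ K ↔ weakLe (f J) (f K))) := by
  classical
  subst hw
  choose f hf hN using fun J : Set I => exists_longest hC w.tgt J
  have hgen : ∀ (J : Set I) (i : I), i ∈ J → weakLe (sgen C w.tgt i) (f J) := fun J i hi =>
    (hf J).2.2 _ rfl (sgen_inParabolic hi _)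
  have hmono : ∀ J K : Set I, J ⊆ K ↔ weakLe (f J) (f K) := by
    intro J K
    constructor
    · intro hJK
      refine (hf K).2.2 _ (hf J).1 ?_
      obtain ⟨l, h1, h2⟩ := (hf J).2.1
      exact ⟨l, fun i hi => hJK (h1 i hi), h2⟩
    · intro h i hi
      have h1 := weakLe_trans (hgen J i hi) h
      rw [← (hf K).1] at h1
      have h2 := sr_mem_NN hC h1
      rw [hN K] at h2
      by_contra hiK
      have := h2.2 i hiK
      simp at this
  refine ⟨f, fun J _ => hf J, ⟨?_, ?_, ?_⟩, fun J K _ _ => hmono J K⟩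
  · -- if `w⁻¹` inverts the simple roots in `J`, it inverts all positive roots supported on `J`
    intro J hJ
    refine ⟨J, hf J, weakLe_of_NN_subset hC (hf J).1.symm ?_⟩
    rw [hN J]
    exact (minv_path w).PR_subset_Invs hC fun j hj => (sr_mem_NN hC (hJ hj)).2
  · intro J _ K _ h
    refine Set.Subset.antisymm ((hmono J K).2 ?_) ((hmono K J).2 ?_)
    · rw [← h]; exact (hmono J J).1 le_rfl
    · rw [h]; exact (hmono K K).1 le_rfl
  · rintro m ⟨J, hm, hmw⟩
    rw [hm.unique (hf J)] at hmw ⊢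
    exact ⟨J, fun i hi => weakLe_trans (hgen J i hi) hmw, rfl⟩
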